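/- Under the system model, for every l ∈ {1,…,L} and k ∈ {1,…,K}, the cross-covariance between the effective channel at time t and the stacked received pilot signal satisfies E[h_{jlk}(t) ψ_jᴴ] = λ_{jlk} (x̃_{lk}ᴴ D_{δ(t)}) ⊗ I_N; equivalently, for every pilot time b ∈ {1,…,B}, E[h_{jlk}(t) y_j(b)ᴴ] = λ_{jlk} x_{lk}(b)* e^{−δ(t−b)/2} · I_N. -/

import Mathlib

open MeasureTheory ProbabilityTheory Matrix Complex
open scoped ProbabilityTheory Kronecker

/-- Deterministic phase-drift damping matrix
`D_{δ(t)} = diag(e^{−δ(t−1)/2}, …, e^{−δ(t−B)/2})`; the `b`-th diagonal entry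
(`b : Fin B`, corresponding to pilot time `b+1`) is `e^{−δ(t−(b+1))/2}`. -/
noncomputable def Dmat (δ : ℝ) (t B : ℕ) : Matrix (Fin B) (Fin B) ℂ :=
  Matrix.diagonal fun b => (Real.exp (-(δ / 2) * ((t : ℝ) - ((b : ℕ) + 1))) : ℂ)

/-- Deterministic pilot matrix `X_{ℓm}` built from the pilot sequence `xv`:
diagonal entries `|x(b)|²(1+κ²)` and off-diagonal entries `x(b₁)x(b₂)* e^{−δ|b₁−b₂|/2}`. -/
noncomputable def Xmat {B : ℕ} (κ δ : ℝ) (xv : Fin B → ℂ) : Matrix (Fin B) (Fin B) ℂ :=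
  Matrix.of fun b₁ b₂ =>
    if b₁ = b₂ then ((Complex.normSq (xv b₁) * (1 + κ ^ 2) : ℝ) : ℂ)
    else xv b₁ * star (xv b₂) * (Real.exp (-(δ / 2) * |((b₁ : ℕ) : ℝ) - ((b₂ : ℕ) : ℝ)|) : ℂ)

/-- Deterministic matrix `Ψ_j = Σ_ℓ Σ_m λ_{jℓm} X_{ℓm} + σ²ξ I_B`. -/
noncomputable def PsiMat {B L K : ℕ} (lam : Fin L → Fin K → ℝ) (σ2 ξ κ δ : ℝ)
    (x : Fin L → Fin K → Fin B → ℂ) : Matrix (Fin B) (Fin B) ℂ :=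
  (∑ l, ∑ m, ((lam l m : ℝ) : ℂ) • Xmat κ δ (x l m)) + ((σ2 * ξ : ℝ) : ℂ) • 1

/-- The uplink massive MIMO system model at base station `j`, on the probability space `Ω`,
with `N` antennas, pilot length `B`, `L` cells, `K` users per cell, channel attenuations
`lam l k = λ_{jlk}`, noise variance `σ2 = σ²`, noise amplification `ξ`, distortion parameter
`κ`, phase-drift variance `δ`, and deterministic pilot sequences `x l k : Fin B → ℂ`
(pilot time `b+1` for `b : Fin B`).  All underlying real random sources are mutually
independent: channel real/imaginary parts `hRe, hIm ~ N(0, λ_{jlk}/2)` (so the channel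
coefficients are `CN(0, λ_{jlk})`), phase-drift increments `dphi n u ~ N(0, δ)` (`u ≥ 1`),
distortion real/imaginary parts `zRe, zIm ~ N(0, 1/2)` (so `z ~ CN(0,1)`), and receiver-noise
real/imaginary parts `etaRe, etaIm ~ N(0, σ²ξ/2)` (so `η ~ CN(0, σ²ξ)`). -/
structure MIMOModel (Ω : Type*) [MeasureSpace Ω] (N B L K : ℕ)
    (lam : Fin L → Fin K → ℝ) (σ2 ξ κ δ : ℝ) (x : Fin L → Fin K → Fin B → ℂ) where
  hRe : Fin L → Fin K → Fin N → Ω → ℝ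
  hIm : Fin L → Fin K → Fin N → Ω → ℝ
  dphi : Fin N → ℕ → Ω → ℝ
  zRe : Fin N → ℕ → Ω → ℝ
  zIm : Fin N → ℕ → Ω → ℝ
  etaRe : Fin N → ℕ → Ω → ℝ
  etaIm : Fin N → ℕ → Ω → ℝ
  meas_hRe : ∀ l k n, Measurable (hRe l k n)
  meas_hIm : ∀ l k n, Measurable (hIm l k n)
  meas_dphi : ∀ n u, Measurable (dphi n u)
  meas_zRe : ∀ n s, Measurable (zRe n s)
  meas_zIm : ∀ n s, Measurable (zIm n s)
  meas_etaRe : ∀ n s, Measurable (etaRe n s)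
  meas_etaIm : ∀ n s, Measurable (etaIm n s)
  law_hRe : ∀ l k n, Measure.map (hRe l k n) ℙ = gaussianReal 0 (Real.toNNReal (lam l k / 2))
  law_hIm : ∀ l k n, Measure.map (hIm l k n) ℙ = gaussianReal 0 (Real.toNNReal (lam l k / 2))
  law_dphi : ∀ n u, Measure.map (dphi n u) ℙ = gaussianReal 0 (Real.toNNReal δ)
  law_zRe : ∀ n s, Measure.map (zRe n s) ℙ = gaussianReal 0 (Real.toNNReal (1 / 2))
  law_zIm : ∀ n s, Measure.map (zIm n s) ℙ = gaussianReal 0 (Real.toNNReal (1 / 2))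
  law_etaRe : ∀ n s, Measure.map (etaRe n s) ℙ = gaussianReal 0 (Real.toNNReal (σ2 * ξ / 2))
  law_etaIm : ∀ n s, Measure.map (etaIm n s) ℙ = gaussianReal 0 (Real.toNNReal (σ2 * ξ / 2))
  indep : iIndepFun (m := fun _ => (inferInstance : MeasurableSpace ℝ))
    (fun i : (Fin L × Fin K × Fin N × Bool) ⊕ (Fin N × ℕ) ⊕ (Fin N × ℕ × Bool) ⊕
        (Fin N × ℕ × Bool) =>
      match i with
      | Sum.inl (l, k, n, false) => hRe l k n
      | Sum.inl (l, k, n, true) => hIm l k n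
      | Sum.inr (Sum.inl (n, u)) => dphi n u
      | Sum.inr (Sum.inr (Sum.inl (n, s, false))) => zRe n s
      | Sum.inr (Sum.inr (Sum.inl (n, s, true))) => zIm n s
      | Sum.inr (Sum.inr (Sum.inr (n, s, false))) => etaRe n s
      | Sum.inr (Sum.inr (Sum.inr (n, s, true))) => etaIm n s) (ℙ : Measure Ω)

namespace MIMOModel

variable {Ω : Type*} [MeasureSpace Ω] {N B L K : ℕ} {lam : Fin L → Fin K → ℝ}
  {σ2 ξ κ δ : ℝ} {x : Fin L → Fin K → Fin B → ℂ}

variable (M : MIMOModel Ω N B L K lam σ2 ξ κ δ x)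

/-- Accumulated phase drift `φ_{jn}(s) = Σ_{u=1}^{s} Δ_{jn}(u)`. -/
noncomputable def phase (n : Fin N) (s : ℕ) (ω : Ω) : ℝ :=
  ∑ u ∈ Finset.Icc 1 s, M.dphi n u ω

/-- Channel coefficient `h_{jlk}^{(n)} ~ CN(0, λ_{jlk})`. -/
noncomputable def ch (l : Fin L) (k : Fin K) (n : Fin N) (ω : Ω) : ℂ :=
  Complex.mk (M.hRe l k n ω) (M.hIm l k n ω)

/-- Distortion variable `z_{jn}(s) ~ CN(0,1)`. -/
noncomputable def z (n : Fin N) (s : ℕ) (ω : Ω) : ℂ :=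
  Complex.mk (M.zRe n s ω) (M.zIm n s ω)

/-- Receiver noise `η_j^{(n)}(s) ~ CN(0, σ²ξ)`. -/
noncomputable def eta (n : Fin N) (s : ℕ) (ω : Ω) : ℂ :=
  Complex.mk (M.etaRe n s ω) (M.etaIm n s ω)

/-- Received pilot signal at antenna `n`, pilot time `b+1` (for `b : Fin B`):
`y_j^{(n)}(b) = e^{iφ_{jn}(b)} Σ_l Σ_m h_{jlm}^{(n)} x_{lm}(b)
  + κ (Σ_l Σ_m |x_{lm}(b)|² |h_{jlm}^{(n)}|²)^{1/2} z_{jn}(b) + η_j^{(n)}(b)`. -/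
noncomputable def y (n : Fin N) (b : Fin B) (ω : Ω) : ℂ :=
  Complex.exp (Complex.I * ((M.phase n ((b : ℕ) + 1) ω : ℝ) : ℂ))
      * ∑ l, ∑ m, M.ch l m n ω * x l m b
    + (κ : ℂ) * ((Real.sqrt (∑ l, ∑ m, Complex.normSq (x l m b)
        * Complex.normSq (M.ch l m n ω)) : ℝ) : ℂ) * M.z n ((b : ℕ) + 1) ω
    + M.eta n ((b : ℕ) + 1) ω

/-- Effective channel at time `t`: `h_{jlk}(t)` has `n`-th entry `e^{iφ_{jn}(t)} h_{jlk}^{(n)}`. -/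
noncomputable def hEff (l : Fin L) (k : Fin K) (t : ℕ) (n : Fin N) (ω : Ω) : ℂ :=
  Complex.exp (Complex.I * ((M.phase n t ω : ℝ) : ℂ)) * M.ch l k n ω

/-- LMMSE channel estimate `ĥ_{jlk}(t) = λ_{jlk} Σ_b c_b y_j(b)` with
`(c_1, …, c_B) = x̃_{lk}ᴴ D_{δ(t)} Ψ_j⁻¹`. -/
noncomputable def hHat (l : Fin L) (k : Fin K) (t : ℕ) (n : Fin N) (ω : Ω) : ℂ :=
  ((lam l k : ℝ) : ℂ) * ∑ b,
    Matrix.vecMul (star (x l k)) (Dmat δ t B * (PsiMat lam σ2 ξ κ δ x)⁻¹) b * M.y n b ω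

/-- Data-phase distortion noise `υ_j(t)` with `n`-th entry
`κ (Σ_l Σ_m p_{lm} |h_{jlm}^{(n)}|²)^{1/2} z_{jn}(t)`. -/
noncomputable def ups (p : Fin L → Fin K → ℝ) (t : ℕ) (n : Fin N) (ω : Ω) : ℂ :=
  (κ : ℂ) * ((Real.sqrt (∑ l, ∑ m, p l m * Complex.normSq (M.ch l m n ω)) : ℝ) : ℂ)
    * M.z n t ω

/-- The uplink SINR of user `k` in cell `j` at time `t` with the MRC filter
`v_{jk}(t) = ĥ_{jjk}(t)`. -/
noncomputable def SINR (p : Fin L → Fin K → ℝ) (j : Fin L) (k : Fin K) (t : ℕ) : ℝ :=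
  p j k * Complex.normSq (∫ ω, ∑ n, star (M.hHat j k t n ω) * M.hEff j k t n ω) /
    ((∑ l, ∑ m, p l m * ∫ ω, Complex.normSq (∑ n, star (M.hHat j k t n ω) * M.hEff l m t n ω))
      - p j k * Complex.normSq (∫ ω, ∑ n, star (M.hHat j k t n ω) * M.hEff j k t n ω)
      + (∫ ω, Complex.normSq (∑ n, star (M.hHat j k t n ω) * M.ups p t n ω))
      + σ2 * ξ * ∫ ω, ∑ n, Complex.normSq (M.hHat j k t n ω))

end MIMOModel

/-!
The received pilot at antenna `n` and time `b` is `∑ l m, x_{lm}(b) h_{jlm}^{(n)}(b)` plus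
distortion plus noise, where `h_{jlm}(b)` is the effective channel. The noise is centred and
independent of `h_{jlk}(t)`; the distortion is `κ` times an amplitude times `z`, with `z` centred
and independent of the amplitude and of `h_{jlk}(t)` jointly. Neither contributes to the
correlation. In what remains the channels are independent of the phases, so
`E[h_{jlk}^{(n)}(t) h_{jl'k'}^{(n')}(b)*]` is the channel second moment, nonzero only on the
diagonal, times `E[e^{i(φ(t) - φ(b))}]`. The latter is the characteristic function at `1` of a sum
of `|t - b|` independent `N(0, δ)` increments.
-/

open scoped NNReal ENNReal

lemma memLp_two_sqrt {α : Type*} {mα : MeasurableSpace α} {μ : Measure α} {f : α → ℝ}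
    (hf : Integrable f μ) : MemLp (fun a ↦ √(f a)) 2 μ := by
  rw [memLp_two_iff_integrable_sq
    (Real.continuous_sqrt.comp_aestronglyMeasurable hf.aestronglyMeasurable)]
  simpa only [Real.sq_sqrt'] using hf.pos_part

section Gaussian

variable {Ω : Type*} {mΩ : MeasurableSpace Ω} {P : Measure Ω}

lemma integral_eq_zero_of_hasLaw_gaussianReal {X : Ω → ℝ} {v : ℝ≥0}
    (hX : HasLaw X (gaussianReal 0 v) P) : ∫ ω, X ω ∂P = 0 :=
  hX.integral_eq.trans integral_id_gaussianReal

lemma integral_sq_of_hasLaw_gaussianReal {X : Ω → ℝ} {v : ℝ≥0}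
    (hX : HasLaw X (gaussianReal 0 v) P) : ∫ ω, X ω ^ 2 ∂P = v := by
  rw [← variance_of_integral_eq_zero hX.aemeasurable
    (integral_eq_zero_of_hasLaw_gaussianReal hX), hX.variance_eq, variance_id_gaussianReal]

lemma memLp_of_hasLaw_gaussianReal {X : Ω → ℝ} {m : ℝ} {v : ℝ≥0} {p : ℝ≥0∞}
    (hX : HasLaw X (gaussianReal m v) P) (hp : p ≠ ∞) : MemLp X p P := by
  have hid := memLp_id_gaussianReal' (μ := m) (v := v) p hp
  rw [← hX.map_eq] at hid
  exact (memLp_map_measure_iff aestronglyMeasurable_id hX.aemeasurable).1 hid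

lemma integral_exp_I_mul_sum_of_hasLaw_gaussianReal {ι : Type*} {X : ι → Ω → ℝ} {v : ι → ℝ≥0}
    (hindep : iIndepFun X P) (hX : ∀ i, HasLaw (X i) (gaussianReal 0 (v i)) P) (s : Finset ι) :
    ∫ ω, exp (I * ((∑ i ∈ s, X i ω : ℝ) : ℂ)) ∂P
      = ((Real.exp (-(∑ i ∈ s, (v i : ℝ)) / 2) : ℝ) : ℂ) := by
  have hmeas (i : ι) : AEMeasurable (X i) P := (hX i).aemeasurable
  have hcharFun := congrFun
    ((hindep.restrict s).charFun_map_fun_finsetSum_eq_prod fun i _ ↦ hmeas i) 1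
  rw [charFun_apply_real,
    integral_map (Finset.aemeasurable_fun_sum s fun i _ ↦ hmeas i) (by fun_prop)] at hcharFun
  simp only [ofReal_one, one_mul, Finset.prod_apply, (hX _).map_eq, charFun_gaussianReal,
    ← exp_sum] at hcharFun
  simp_rw [mul_comm I, hcharFun]
  simp [Finset.sum_div, neg_div]

/-- A marginal form of `Z ∼ CN(0, v)`: the real and imaginary parts of `Z` are `N(0, v / 2)`, and
their joint law is left free. This already determines `E Z` and `E |Z|²`. -/
structure HasComplexGaussianParts (Z : Ω → ℂ) (v : ℝ) (P : Measure Ω) : Prop where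
  hasLaw_re : HasLaw (fun ω ↦ (Z ω).re) (gaussianReal 0 (v / 2).toNNReal) P
  hasLaw_im : HasLaw (fun ω ↦ (Z ω).im) (gaussianReal 0 (v / 2).toNNReal) P

namespace HasComplexGaussianParts

variable {Z : Ω → ℂ} {v : ℝ}

lemma memLp (hZ : HasComplexGaussianParts Z v P) {p : ℝ≥0∞} (hp : p ≠ ∞) : MemLp Z p P :=
  memLp_re_im_iff.1 ⟨memLp_of_hasLaw_gaussianReal hZ.hasLaw_re hp,
    memLp_of_hasLaw_gaussianReal hZ.hasLaw_im hp⟩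

lemma aestronglyMeasurable (hZ : HasComplexGaussianParts Z v P) : AEStronglyMeasurable Z P :=
  (hZ.memLp ENNReal.one_ne_top).aestronglyMeasurable

lemma integral_eq_zero (hZ : HasComplexGaussianParts Z v P) : ∫ ω, Z ω ∂P = 0 := by
  rw [← integral_re_add_im (memLp_one_iff_integrable.1 (hZ.memLp ENNReal.one_ne_top))]
  simp [integral_eq_zero_of_hasLaw_gaussianReal hZ.hasLaw_re,
    integral_eq_zero_of_hasLaw_gaussianReal hZ.hasLaw_im]

lemma integral_mul_star_self (hZ : HasComplexGaussianParts Z v P) (hv : 0 ≤ v) :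
    ∫ ω, Z ω * star (Z ω) ∂P = v := by
  have hsq (ω : Ω) : Z ω * star (Z ω) = (((Z ω).re ^ 2 + (Z ω).im ^ 2 : ℝ) : ℂ) := by
    rw [star_def, mul_conj, normSq_apply, sq, sq]
  simp_rw [hsq]
  rw [integral_complex_ofReal,
    integral_add (memLp_of_hasLaw_gaussianReal hZ.hasLaw_re ENNReal.ofNat_ne_top).integrable_sq
      (memLp_of_hasLaw_gaussianReal hZ.hasLaw_im ENNReal.ofNat_ne_top).integrable_sq,
    integral_sq_of_hasLaw_gaussianReal hZ.hasLaw_re,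
    integral_sq_of_hasLaw_gaussianReal hZ.hasLaw_im, Real.coe_toNNReal _ (by positivity),
    add_halves]

end HasComplexGaussianParts

end Gaussian

section Independence

variable {Ω : Type*} {mΩ : MeasurableSpace Ω} {P : Measure Ω}

lemma integral_mul_star_eq_zero_of_indepFun {𝕜 : Type*} [RCLike 𝕜] {X Y : Ω → 𝕜}
    (hXY : IndepFun X Y P) (hX : AEStronglyMeasurable X P) (hY : AEStronglyMeasurable Y P)
    (hY0 : ∫ ω, Y ω ∂P = 0) : ∫ ω, X ω * star (Y ω) ∂P = 0 := by
  have hindep : IndepFun X (fun ω ↦ star (Y ω)) P :=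
    hXY.comp measurable_id continuous_star.measurable
  have hstar : ∫ ω, star (Y ω) ∂P = 0 := integral_conj.trans (by rw [hY0, map_zero])
  rw [hindep.integral_fun_mul_eq_mul_integral hX hY.star, hstar, mul_zero]

lemma memLp_mul_of_indepFun {𝕜 : Type*} [NormedDivisionRing 𝕜] [MeasurableSpace 𝕜]
    [OpensMeasurableSpace 𝕜] {X Y : Ω → 𝕜} {p : ℝ≥0∞} (hp : p ≠ 0) (hp_top : p ≠ ∞)
    (hXY : IndepFun X Y P) (hX : MemLp X p P) (hY : MemLp Y p P) :
    MemLp (fun ω ↦ X ω * Y ω) p P := by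
  refine (integrable_norm_rpow_iff (hX.1.mul hY.1) hp hp_top).1 ?_
  have hnorm : Measurable fun z : 𝕜 ↦ ‖z‖ ^ p.toReal := by fun_prop
  simpa [Real.mul_rpow, Function.comp_def, Pi.mul_def] using
    (hXY.comp hnorm hnorm).integrable_mul (hX.integrable_norm_rpow hp hp_top)
      (hY.integrable_norm_rpow hp hp_top)

variable {ι β : Type*} [MeasurableSpace β] {f : ι → Ω → β}

/-- The σ-algebra generated by the subfamily `(f i)_{i ∈ S}`; a random variable is a function of
that subfamily when it is measurable for it. -/
abbrev subfamilySigma (f : ι → Ω → β) (S : Set ι) : MeasurableSpace Ω :=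
  ⨆ i ∈ S, MeasurableSpace.comap (f i) inferInstance

lemma measurable_subfamilySigma {Ω : Type*} {f : ι → Ω → β} {S : Set ι} {i : ι} (hi : i ∈ S) :
    Measurable[subfamilySigma f S] (f i) :=
  (comap_measurable (f i)).mono (le_iSup₂ (f := fun j (_ : j ∈ S) ↦
    MeasurableSpace.comap (f j) inferInstance) i hi) le_rfl

lemma measurable_subfamilySigma_complex_mk {Ω : Type*} {f : ι → Ω → ℝ} {S : Set ι} {i j : ι}
    (hi : i ∈ S) (hj : j ∈ S) :
    Measurable[subfamilySigma f S] fun ω ↦ (⟨f i ω, f j ω⟩ : ℂ) :=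
  Complex.measurableEquivRealProd.symm.measurable.comp
    ((measurable_subfamilySigma hi).prodMk (measurable_subfamilySigma hj))

lemma subfamilySigma_le (hf : ∀ i, Measurable (f i)) (S : Set ι) : subfamilySigma f S ≤ mΩ :=
  iSup₂_le fun i _ ↦ (hf i).comap_le

lemma indepFun_of_measurable_subfamilySigma (hindep : iIndepFun f P) (hf : ∀ i, Measurable (f i))
    {S T : Set ι} (hST : Disjoint S T) {γ γ' : Type*} [MeasurableSpace γ] [MeasurableSpace γ']
    {X : Ω → γ} {Y : Ω → γ'} (hX : Measurable[subfamilySigma f S] X)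
    (hY : Measurable[subfamilySigma f T] Y) : IndepFun X Y P := by
  rw [IndepFun_iff_Indep]
  exact indep_of_indep_of_le
    (indep_iSup_of_disjoint (fun i ↦ (hf i).comap_le) hindep.iIndep hST) hX.comap_le hY.comap_le

end Independence

namespace MIMOModel

/-- The index set of all real Gaussian sources of the model: the channel parts, the phase
increments, the distortion parts and the noise parts, in this order; the `Bool` is `false` for a
real part and `true` for an imaginary part. -/
abbrev SourceIndex (N L K : ℕ) : Type :=
  (Fin L × Fin K × Fin N × Bool) ⊕ (Fin N × ℕ) ⊕ (Fin N × ℕ × Bool) ⊕ (Fin N × ℕ × Bool)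

variable {Ω : Type*} [MeasureSpace Ω] {N B L K : ℕ} {lam : Fin L → Fin K → ℝ}
  {σ2 ξ κ δ : ℝ} {x : Fin L → Fin K → Fin B → ℂ}
  (M : MIMOModel Ω N B L K lam σ2 ξ κ δ x)

/-- All the real Gaussian sources of the model as one family, matching the family whose mutual
independence is postulated by `MIMOModel.indep`. -/
def source (i : SourceIndex N L K) : Ω → ℝ :=
  match i with
  | Sum.inl (l, k, n, false) => M.hRe l k n
  | Sum.inl (l, k, n, true) => M.hIm l k n
  | Sum.inr (Sum.inl (n, u)) => M.dphi n u
  | Sum.inr (Sum.inr (Sum.inl (n, s, false))) => M.zRe n s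
  | Sum.inr (Sum.inr (Sum.inl (n, s, true))) => M.zIm n s
  | Sum.inr (Sum.inr (Sum.inr (n, s, false))) => M.etaRe n s
  | Sum.inr (Sum.inr (Sum.inr (n, s, true))) => M.etaIm n s

lemma iIndepFun_source : iIndepFun M.source (ℙ : Measure Ω) := M.indep

lemma measurable_source (i : SourceIndex N L K) : Measurable (M.source i) := by
  rcases i with ⟨l, k, n, _ | _⟩ | ⟨n, u⟩ | ⟨n, s, _ | _⟩ | ⟨n, s, _ | _⟩
  exacts [M.meas_hRe l k n, M.meas_hIm l k n, M.meas_dphi n u, M.meas_zRe n s, M.meas_zIm n s,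
    M.meas_etaRe n s, M.meas_etaIm n s]

lemma hasComplexGaussianParts_ch (l : Fin L) (k : Fin K) (n : Fin N) :
    HasComplexGaussianParts (M.ch l k n) (lam l k) ℙ :=
  ⟨⟨(M.meas_hRe l k n).aemeasurable, M.law_hRe l k n⟩,
    ⟨(M.meas_hIm l k n).aemeasurable, M.law_hIm l k n⟩⟩

lemma hasComplexGaussianParts_z (n : Fin N) (s : ℕ) : HasComplexGaussianParts (M.z n s) 1 ℙ :=
  ⟨⟨(M.meas_zRe n s).aemeasurable, M.law_zRe n s⟩, ⟨(M.meas_zIm n s).aemeasurable, M.law_zIm n s⟩⟩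

lemma hasComplexGaussianParts_eta (n : Fin N) (s : ℕ) :
    HasComplexGaussianParts (M.eta n s) (σ2 * ξ) ℙ :=
  ⟨⟨(M.meas_etaRe n s).aemeasurable, M.law_etaRe n s⟩,
    ⟨(M.meas_etaIm n s).aemeasurable, M.law_etaIm n s⟩⟩

/-- The unit-modulus phase factor `e^{iφ_{jn}(s)}`. -/
noncomputable def phasor (n : Fin N) (s : ℕ) (ω : Ω) : ℂ :=
  exp (I * ((M.phase n s ω : ℝ) : ℂ))

lemma norm_phasor (n : Fin N) (s : ℕ) (ω : Ω) : ‖M.phasor n s ω‖ = 1 :=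
  norm_exp_I_mul_ofReal _

/-- The amplitude of the distortion `MIMOModel.ups`, without the factor `κ`:
`(Σ_l Σ_m p_{lm} |h_{jlm}^{(n)}|²)^{1/2}`. -/
noncomputable def amplitude (p : Fin L → Fin K → ℝ) (n : Fin N) (ω : Ω) : ℝ :=
  √(∑ l, ∑ m, p l m * normSq (M.ch l m n ω))

section Measurability

variable {S : Set (SourceIndex N L K)}

lemma measurable_ch {l : Fin L} {k : Fin K} {n : Fin N} (hS : ∀ c, Sum.inl (l, k, n, c) ∈ S) :
    Measurable[subfamilySigma M.source S] (M.ch l k n) :=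
  measurable_subfamilySigma_complex_mk (f := M.source) (hS false) (hS true)

lemma measurable_z {n : Fin N} {s : ℕ} (hS : ∀ c, Sum.inr (Sum.inr (Sum.inl (n, s, c))) ∈ S) :
    Measurable[subfamilySigma M.source S] (M.z n s) :=
  measurable_subfamilySigma_complex_mk (f := M.source) (hS false) (hS true)

lemma measurable_eta {n : Fin N} {s : ℕ} (hS : ∀ c, Sum.inr (Sum.inr (Sum.inr (n, s, c))) ∈ S) :
    Measurable[subfamilySigma M.source S] (M.eta n s) :=
  measurable_subfamilySigma_complex_mk (f := M.source) (hS false) (hS true)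

lemma measurable_phasor {n : Fin N} (hS : ∀ u, Sum.inr (Sum.inl (n, u)) ∈ S) (s : ℕ) :
    Measurable[subfamilySigma M.source S] (M.phasor n s) := by
  have hdphi (u : ℕ) : Measurable[subfamilySigma M.source S] (M.dphi n u) :=
    measurable_subfamilySigma (hS u)
  unfold phasor phase
  fun_prop

lemma measurable_hEff {l : Fin L} {k : Fin K} {n : Fin N} (hch : ∀ c, Sum.inl (l, k, n, c) ∈ S)
    (hphase : ∀ u, Sum.inr (Sum.inl (n, u)) ∈ S) (t : ℕ) :
    Measurable[subfamilySigma M.source S] (M.hEff l k t n) :=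
  (M.measurable_phasor hphase t).mul (M.measurable_ch hch)

lemma measurable_amplitude {n : Fin N} (hS : ∀ l k c, Sum.inl (l, k, n, c) ∈ S)
    (p : Fin L → Fin K → ℝ) : Measurable[subfamilySigma M.source S] (M.amplitude p n) := by
  have hch (l : Fin L) (m : Fin K) : Measurable[subfamilySigma M.source S] (M.ch l m n) :=
    M.measurable_ch (hS l m)
  unfold amplitude
  fun_prop

end Measurability

section Moments

lemma memLp_hEff (l : Fin L) (k : Fin K) (t : ℕ) (n : Fin N) {p : ℝ≥0∞} (hp : p ≠ ∞) :
    MemLp (M.hEff l k t n) p ℙ := by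
  have hmeas : Measurable (M.hEff l k t n) :=
    (M.measurable_hEff (S := Set.univ) (fun _ ↦ trivial) (fun _ ↦ trivial) t).mono
      (subfamilySigma_le M.measurable_source _) le_rfl
  refine ((M.hasComplexGaussianParts_ch l k n).memLp hp).of_le hmeas.aestronglyMeasurable ?_
  refine .of_forall fun ω ↦ le_of_eq ?_
  change ‖M.phasor n t ω * M.ch l k n ω‖ = _
  rw [norm_mul, norm_phasor, one_mul]

lemma memLp_two_amplitude (p : Fin L → Fin K → ℝ) (n : Fin N) :
    MemLp (M.amplitude p n) 2 ℙ := by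
  refine memLp_two_sqrt (integrable_finsetSum _ fun l _ ↦ integrable_finsetSum _ fun m _ ↦ ?_)
  simp_rw [normSq_eq_norm_sq]
  exact (((M.hasComplexGaussianParts_ch l m n).memLp
    ENNReal.ofNat_ne_top).integrable_norm_pow two_ne_zero).const_mul _

lemma indepFun_amplitude_z (p : Fin L → Fin K → ℝ) (n n' : Fin N) (s : ℕ) :
    IndepFun (M.amplitude p n) (M.z n' s) ℙ :=
  indepFun_of_measurable_subfamilySigma M.iIndepFun_source M.measurable_source
    (S := Set.range Sum.inl) (T := Set.range Sum.inr)
    Set.isCompl_range_inl_range_inr.disjoint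
    (M.measurable_amplitude (fun _ _ _ ↦ Set.mem_range_self _) p)
    (M.measurable_z fun _ ↦ Set.mem_range_self _)

lemma memLp_two_ups (p : Fin L → Fin K → ℝ) (t : ℕ) (n : Fin N) :
    MemLp (M.ups p t n) 2 ℙ :=
  memLp_mul_of_indepFun two_ne_zero ENNReal.ofNat_ne_top
    ((M.indepFun_amplitude_z p n n t).comp
      (φ := fun r : ℝ ↦ (κ : ℂ) * (r : ℂ)) (by fun_prop) measurable_id)
    ((M.memLp_two_amplitude p n).ofReal.const_mul _)
    ((M.hasComplexGaussianParts_z n t).memLp ENNReal.ofNat_ne_top)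

lemma integral_hEff_mul_star_eta (l : Fin L) (k : Fin K) (t s : ℕ) (n n' : Fin N) :
    ∫ ω, M.hEff l k t n ω * star (M.eta n' s ω) = 0 := by
  set S : Set (SourceIndex N L K) := Set.range fun c ↦ Sum.inr (Sum.inr (Sum.inr (n', s, c)))
  have hindep : IndepFun (M.hEff l k t n) (M.eta n' s) ℙ :=
    indepFun_of_measurable_subfamilySigma M.iIndepFun_source M.measurable_source
      (S := Sᶜ) disjoint_compl_left (M.measurable_hEff (by simp [S]) (by simp [S]) t)
      (M.measurable_eta fun c ↦ Set.mem_range_self c)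
  exact integral_mul_star_eq_zero_of_indepFun hindep
    (M.memLp_hEff l k t n ENNReal.one_ne_top).aestronglyMeasurable
    (M.hasComplexGaussianParts_eta n' s).aestronglyMeasurable
    (M.hasComplexGaussianParts_eta n' s).integral_eq_zero

lemma integral_hEff_mul_star_ups (l : Fin L) (k : Fin K) (p : Fin L → Fin K → ℝ) (t s : ℕ)
    (n n' : Fin N) : ∫ ω, M.hEff l k t n ω * star (M.ups p s n' ω) = 0 := by
  set S : Set (SourceIndex N L K) := Set.range fun c ↦ Sum.inr (Sum.inr (Sum.inl (n', s, c)))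
  have hhEff : Measurable[subfamilySigma M.source Sᶜ] (M.hEff l k t n) :=
    M.measurable_hEff (by simp [S]) (by simp [S]) t
  have hamplitude : Measurable[subfamilySigma M.source Sᶜ] (M.amplitude p n') :=
    M.measurable_amplitude (by simp [S]) p
  have hmeas : Measurable[subfamilySigma M.source Sᶜ]
      fun ω ↦ M.hEff l k t n ω * ((κ : ℂ) * (M.amplitude p n' ω : ℂ)) := by
    fun_prop
  have hindep := indepFun_of_measurable_subfamilySigma M.iIndepFun_source M.measurable_source
    disjoint_compl_left hmeas (M.measurable_z fun c ↦ Set.mem_range_self c)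
  have hfactor (ω : Ω) : M.hEff l k t n ω * star (M.ups p s n' ω)
      = M.hEff l k t n ω * ((κ : ℂ) * (M.amplitude p n' ω : ℂ)) * star (M.z n' s ω) := by
    simp [ups, amplitude, mul_assoc]
  simp_rw [hfactor]
  exact integral_mul_star_eq_zero_of_indepFun hindep
    (hmeas.mono (subfamilySigma_le M.measurable_source _) le_rfl).aestronglyMeasurable
    (M.hasComplexGaussianParts_z n' s).aestronglyMeasurable
    (M.hasComplexGaussianParts_z n' s).integral_eq_zero

lemma integral_ch_mul_star_ch {l : Fin L} {k : Fin K} (hlam : 0 ≤ lam l k) (l' : Fin L)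
    (k' : Fin K) (n n' : Fin N) :
    ∫ ω, M.ch l k n ω * star (M.ch l' k' n' ω)
      = if l = l' ∧ k = k' ∧ n = n' then (lam l k : ℂ) else 0 := by
  split_ifs with heq
  · obtain ⟨rfl, rfl, rfl⟩ := heq
    exact (M.hasComplexGaussianParts_ch l k n).integral_mul_star_self hlam
  · set S : Set (SourceIndex N L K) := Set.range fun c ↦ Sum.inl (l', k', n', c)
    have hnotMem (c : Bool) : Sum.inl (l, k, n, c) ∈ Sᶜ := by
      rintro ⟨c', hc'⟩
      simp_all
    have hindep : IndepFun (M.ch l k n) (M.ch l' k' n') ℙ :=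
      indepFun_of_measurable_subfamilySigma M.iIndepFun_source M.measurable_source
        disjoint_compl_left (M.measurable_ch hnotMem)
        (M.measurable_ch fun c ↦ Set.mem_range_self c)
    exact integral_mul_star_eq_zero_of_indepFun hindep
      (M.hasComplexGaussianParts_ch l k n).aestronglyMeasurable
      (M.hasComplexGaussianParts_ch l' k' n').aestronglyMeasurable
      (M.hasComplexGaussianParts_ch l' k' n').integral_eq_zero

lemma phase_sub_phase (n : Fin N) {s t : ℕ} (hst : s ≤ t) (ω : Ω) :
    M.phase n t ω - M.phase n s ω = ∑ u ∈ Finset.Ioc s t, M.dphi n u ω := by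
  rw [sub_eq_iff_eq_add']
  exact (Finset.sum_Ioc_consecutive (M.dphi n · ω) s.zero_le hst).symm

lemma integral_phasor_mul_star_phasor_of_le (hδ : 0 ≤ δ) (n : Fin N) {s t : ℕ} (hst : s ≤ t) :
    ∫ ω, M.phasor n t ω * star (M.phasor n s ω)
      = ((Real.exp (-(δ / 2) * |(t : ℝ) - s|) : ℝ) : ℂ) := by
  have hincrement (ω : Ω) : M.phasor n t ω * star (M.phasor n s ω)
      = exp (I * ((∑ u ∈ Finset.Ioc s t, M.dphi n u ω : ℝ) : ℂ)) := by
    rw [← M.phase_sub_phase n hst, phasor, phasor, star_def, ← exp_conj, ← exp_add]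
    simp [mul_add, sub_eq_add_neg]
  have hindep : iIndepFun (M.dphi n) ℙ :=
    M.iIndepFun_source.precomp (g := fun u ↦ Sum.inr (Sum.inl (n, u)))
      fun u v huv ↦ by simpa using huv
  simp_rw [hincrement]
  rw [integral_exp_I_mul_sum_of_hasLaw_gaussianReal hindep
    (fun u ↦ ⟨(M.meas_dphi n u).aemeasurable, M.law_dphi n u⟩)]
  congr 2
  rw [abs_of_nonneg (sub_nonneg.2 (Nat.cast_le.2 hst)), Finset.sum_const, Nat.card_Ioc,
    nsmul_eq_mul, Nat.cast_sub hst, Real.coe_toNNReal δ hδ]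
  ring

lemma integral_phasor_mul_star_phasor (hδ : 0 ≤ δ) (n : Fin N) (t s : ℕ) :
    ∫ ω, M.phasor n t ω * star (M.phasor n s ω)
      = ((Real.exp (-(δ / 2) * |(t : ℝ) - s|) : ℝ) : ℂ) := by
  rcases le_total s t with hst | hts
  · exact M.integral_phasor_mul_star_phasor_of_le hδ n hst
  · have hconj (ω : Ω) : M.phasor n t ω * star (M.phasor n s ω)
        = (starRingEnd ℂ) (M.phasor n s ω * star (M.phasor n t ω)) := by
      simp [mul_comm]
    simp_rw [hconj]
    rw [integral_conj, M.integral_phasor_mul_star_phasor_of_le hδ n hts, conj_ofReal,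
      abs_sub_comm]

lemma integral_hEff_mul_star_hEff {l : Fin L} {k : Fin K} (hlam : 0 ≤ lam l k) (hδ : 0 ≤ δ)
    (l' : Fin L) (k' : Fin K) (t s : ℕ) (n n' : Fin N) :
    ∫ ω, M.hEff l k t n ω * star (M.hEff l' k' s n' ω)
      = if l = l' ∧ k = k' ∧ n = n' then
          (lam l k : ℂ) * ((Real.exp (-(δ / 2) * |(t : ℝ) - s|) : ℝ) : ℂ) else 0 := by
  have hphasor : Measurable[subfamilySigma M.source (Set.range Sum.inr)]
      fun ω ↦ M.phasor n t ω * star (M.phasor n' s ω) :=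
    (M.measurable_phasor (fun _ ↦ Set.mem_range_self _) t).mul
      (continuous_star.measurable.comp (M.measurable_phasor (fun _ ↦ Set.mem_range_self _) s))
  have hch : Measurable[subfamilySigma M.source (Set.range Sum.inl)]
      fun ω ↦ M.ch l k n ω * star (M.ch l' k' n' ω) :=
    (M.measurable_ch fun _ ↦ Set.mem_range_self _).mul
      (continuous_star.measurable.comp (M.measurable_ch fun _ ↦ Set.mem_range_self _))
  have hindep := indepFun_of_measurable_subfamilySigma M.iIndepFun_source M.measurable_source
    Set.isCompl_range_inl_range_inr.disjoint.symm hphasor hch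
  have hfactor (ω : Ω) : M.hEff l k t n ω * star (M.hEff l' k' s n' ω)
      = M.phasor n t ω * star (M.phasor n' s ω) * (M.ch l k n ω * star (M.ch l' k' n' ω)) := by
    simp only [hEff, phasor, star_mul']
    ring
  simp_rw [hfactor]
  rw [hindep.integral_fun_mul_eq_mul_integral
      (hphasor.mono (subfamilySigma_le M.measurable_source _) le_rfl).aestronglyMeasurable
      (hch.mono (subfamilySigma_le M.measurable_source _) le_rfl).aestronglyMeasurable,
    M.integral_ch_mul_star_ch hlam]
  split_ifs with heq
  · obtain ⟨rfl, rfl, rfl⟩ := heq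
    rw [M.integral_phasor_mul_star_phasor hδ, mul_comm]
  · rw [mul_zero]

end Moments

lemma y_eq_sum_hEff_add_ups_add_eta (n : Fin N) (b : Fin B) (ω : Ω) :
    M.y n b ω = ∑ l, ∑ m, M.hEff l m (b + 1) n ω * x l m b
      + M.ups (fun l m ↦ normSq (x l m b)) (b + 1) n ω + M.eta n (b + 1) ω := by
  simp only [y, hEff, ups, Finset.mul_sum, mul_assoc]

lemma integral_hEff_mul_star_y {l : Fin L} {k : Fin K} (hlam : 0 ≤ lam l k) (hδ : 0 ≤ δ) (t : ℕ)
    (b : Fin B) (n₁ n₂ : Fin N) :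
    ∫ ω, M.hEff l k t n₁ ω * star (M.y n₂ b ω)
      = (lam l k : ℂ) * star (x l k b)
          * ((Real.exp (-(δ / 2) * |(t : ℝ) - ((b : ℕ) + 1)|) : ℝ) : ℂ)
          * (1 : Matrix (Fin N) (Fin N) ℂ) n₁ n₂ := by
  have hmul {Y : Ω → ℂ} (hY : MemLp Y 2 ℙ) :
      Integrable (fun ω ↦ M.hEff l k t n₁ ω * star (Y ω)) ℙ :=
    (M.memLp_hEff l k t n₁ (p := 2) ENNReal.ofNat_ne_top).integrable_mul hY.star
  have huser (l' : Fin L) (k' : Fin K) : Integrable (fun ω ↦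
      M.hEff l k t n₁ ω * star (M.hEff l' k' (b + 1) n₂ ω) * star (x l' k' b)) ℙ :=
    (hmul (M.memLp_hEff l' k' (b + 1) n₂ ENNReal.ofNat_ne_top)).mul_const _
  have hcell (l' : Fin L) : Integrable (fun ω ↦ ∑ k',
      M.hEff l k t n₁ ω * star (M.hEff l' k' (b + 1) n₂ ω) * star (x l' k' b)) ℙ :=
    integrable_finsetSum _ fun k' _ ↦ huser l' k'
  have hsignal : Integrable (fun ω ↦ ∑ l', ∑ k',
      M.hEff l k t n₁ ω * star (M.hEff l' k' (b + 1) n₂ ω) * star (x l' k' b)) ℙ :=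
    integrable_finsetSum _ fun l' _ ↦ hcell l'
  have hups := hmul (M.memLp_two_ups (fun l m ↦ normSq (x l m b)) (b + 1) n₂)
  have heta := hmul ((M.hasComplexGaussianParts_eta n₂ (b + 1)).memLp ENNReal.ofNat_ne_top)
  have hexpand (ω : Ω) : M.hEff l k t n₁ ω * star (M.y n₂ b ω)
      = ∑ l', ∑ k', M.hEff l k t n₁ ω * star (M.hEff l' k' (b + 1) n₂ ω) * star (x l' k' b)
        + M.hEff l k t n₁ ω * star (M.ups (fun l m ↦ normSq (x l m b)) (b + 1) n₂ ω)
        + M.hEff l k t n₁ ω * star (M.eta n₂ (b + 1) ω) := by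
    simp only [y_eq_sum_hEff_add_ups_add_eta, star_add, star_sum, star_mul', mul_add,
      Finset.mul_sum, mul_assoc]
  simp_rw [hexpand]
  rw [integral_add (by exact hsignal.add hups) heta, integral_add hsignal hups,
    M.integral_hEff_mul_star_ups, M.integral_hEff_mul_star_eta, add_zero, add_zero,
    integral_finsetSum _ fun l' _ ↦ hcell l']
  simp_rw [integral_finsetSum _ fun k' _ ↦ huser _ k', integral_mul_const,
    M.integral_hEff_mul_star_hEff hlam hδ]
  simp [ite_and, Matrix.one_apply, mul_right_comm]

end MIMOModel

theorem channel_pilot_cross_covariance_general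
    {Ω : Type*} [MeasureSpace Ω] {N B L K : ℕ} {lam : Fin L → Fin K → ℝ}
    {σ2 ξ κ δ : ℝ} {x : Fin L → Fin K → Fin B → ℂ}
    (M : MIMOModel Ω N B L K lam σ2 ξ κ δ x) {l : Fin L} {k : Fin K} (hlam : 0 ≤ lam l k)
    (hδ : 0 ≤ δ) (t : ℕ) :
    ((Matrix.of fun (n₁ : Fin N) (q : Fin B × Fin N) ↦
        ∫ ω, M.hEff l k t n₁ ω * star (M.y q.2 q.1 ω))
      = Matrix.of fun (n₁ : Fin N) (q : Fin B × Fin N) ↦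
          (lam l k : ℂ) * Matrix.vecMul (star (x l k)) (Matrix.diagonal fun b : Fin B ↦
            ((Real.exp (-(δ / 2) * |(t : ℝ) - ((b : ℕ) + 1)|) : ℝ) : ℂ)) q.1
            * (1 : Matrix (Fin N) (Fin N) ℂ) n₁ q.2) ∧
      ∀ b : Fin B,
        (Matrix.of fun n₁ n₂ : Fin N ↦ ∫ ω, M.hEff l k t n₁ ω * star (M.y n₂ b ω))
          = ((lam l k : ℂ) * star (x l k b)
              * ((Real.exp (-(δ / 2) * |(t : ℝ) - ((b : ℕ) + 1)|) : ℝ) : ℂ))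
            • (1 : Matrix (Fin N) (Fin N) ℂ) := by
  refine ⟨?_, fun b ↦ ?_⟩
  · ext n₁ q
    simp only [Matrix.of_apply, M.integral_hEff_mul_star_y hlam hδ, Matrix.vecMul_diagonal,
      Pi.star_apply, mul_assoc]
  · ext n₁ n₂
    simp only [Matrix.of_apply, M.integral_hEff_mul_star_y hlam hδ, Matrix.smul_apply, smul_eq_mul]

/-- **Cross-covariance between the effective channel and the pilot signal
(Theorem 1, second ingredient).** For all `l, k`,
`E[h_{jlk}(t) ψ_jᴴ] = λ_{jlk} (x̃_{lk}ᴴ D_{δ(t)}) ⊗ I_N`; equivalently, for every pilot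
time `b`, `E[h_{jlk}(t) y_j(b)ᴴ] = λ_{jlk} x_{lk}(b)* e^{−δ(t−b)/2} · I_N`. -/
theorem channel_pilot_cross_covariance
    {Ω : Type*} [MeasureSpace Ω] [IsProbabilityMeasure (ℙ : Measure Ω)]
    {N B L K : ℕ} {lam : Fin L → Fin K → ℝ} {σ2 ξ κ δ : ℝ}
    {x : Fin L → Fin K → Fin B → ℂ}
    (M : MIMOModel Ω N B L K lam σ2 ξ κ δ x)
    (hlam : ∀ l k, 0 < lam l k) (hσ2 : 0 < σ2) (hξ : 1 ≤ ξ) (hκ : 0 ≤ κ) (hδ : 0 ≤ δ)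
    (t : ℕ) (ht : B ≤ t) :
    ∀ l : Fin L, ∀ k : Fin K,
      ((Matrix.of fun (n₁ : Fin N) (q : Fin B × Fin N) =>
          ∫ ω, M.hEff l k t n₁ ω * star (M.y q.2 q.1 ω))
        = Matrix.of fun (n₁ : Fin N) (q : Fin B × Fin N) =>
            ((lam l k : ℝ) : ℂ) * Matrix.vecMul (star (x l k)) (Dmat δ t B) q.1
              * (1 : Matrix (Fin N) (Fin N) ℂ) n₁ q.2) ∧
      ∀ b : Fin B,
        (Matrix.of fun n₁ n₂ : Fin N => ∫ ω, M.hEff l k t n₁ ω * star (M.y n₂ b ω))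
          = (((lam l k : ℝ) : ℂ) * star (x l k b)
              * ((Real.exp (-(δ / 2) * ((t : ℝ) - ((b : ℕ) + 1))) : ℝ) : ℂ))
            • (1 : Matrix (Fin N) (Fin N) ℂ) := by
  intro l k
  have habs (b : Fin B) : |(t : ℝ) - ((b : ℕ) + 1)| = (t : ℝ) - ((b : ℕ) + 1) :=
    abs_of_nonneg (sub_nonneg.2 (mod_cast (Nat.succ_le_of_lt b.isLt).trans ht))
  simpa only [Dmat, habs] using channel_pilot_cross_covariance_general M (hlam l k).le hδ t
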